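/- Let θ ∈ (0, 1/2] be such that θ⁻¹ ≥ 2 is an integer. Then every surjective isometry U : S_{T[θ,S₁]} → S_{T[θ,S₁]} of the unit sphere of T[θ, S₁] extends to a surjective linear isometry Ũ : T[θ, S₁] → T[θ, S₁], i.e., there is a surjective linear isometry Ũ with Ũ(x) = U(x) for all x ∈ S_{T[θ,S₁]}. -/

import Mathlib

open scoped BigOperators

noncomputable section

/-- Projection of a finitely supported vector onto the coordinates in `E`. -/
def tsProj (E : Finset ℕ+) (x : ℕ+ →₀ ℝ) : ℕ+ →₀ ℝ :=
  x.filter fun i => i ∈ E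

/-- The Schreier families `S_n` on the positive integers:
`S₁` consists of the sets `F` with `|F| ≤ min F` (together with `∅`), and `S_{n+1}`
consists of unions `F₁ ∪ ⋯ ∪ F_d` of nonempty members `F₁ < ⋯ < F_d` of `S_n`
with `d ≤ min F₁` (together with `∅`). -/
def Schreier : ℕ → Set (Finset ℕ+)
  | 0 => {F | F.card ≤ 1}
  | 1 => {F | ∀ a ∈ F, F.card ≤ (a : ℕ)}
  | n + 2 =>
      {F | F = ∅ ∨
        ∃ (d : ℕ) (G : Fin d → Finset ℕ+),
          0 < d ∧ (∀ i, G i ∈ Schreier (n + 1)) ∧ (∀ i, (G i).Nonempty) ∧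
          (∀ i j : Fin d, i < j → ∀ a ∈ G i, ∀ b ∈ G j, a < b) ∧
          (∀ i, ∀ a ∈ G i, d ≤ (a : ℕ)) ∧ F = Finset.univ.biUnion G}

/-- A tuple of nonempty finite sets `E 0 < E 1 < ⋯` whose set of minima belongs to `S`. -/
def TsAdmissible (S : Set (Finset ℕ+)) {d : ℕ} (E : Fin d → Finset ℕ+) : Prop :=
  (∀ i, (E i).Nonempty) ∧
  (∀ i j : Fin d, i < j → ∀ a ∈ E i, ∀ b ∈ E j, a < b) ∧
  ∃ μ : Fin d → ℕ+, (∀ i, IsLeast (↑(E i) : Set ℕ+) (μ i)) ∧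
    Finset.univ.image μ ∈ S

/-- The iterated norms `‖·‖_m` in the construction of the Tsirelson norm:
`‖x‖₀` is the supremum norm and
`‖x‖_{m+1} = max(‖x‖_m, sup{θ ∑ᵢ ‖Eᵢ x‖_m : E₁ < ⋯ < E_d, {min Eᵢ} ∈ S})`. -/
def tnormAux (θ : ℝ) (S : Set (Finset ℕ+)) : ℕ → (ℕ+ →₀ ℝ) → ℝ
  | 0, x => ⨆ i, |x i|
  | m + 1, x =>
      max (tnormAux θ S m x)
        (sSup {r : ℝ | ∃ (d : ℕ) (E : Fin d → Finset ℕ+), TsAdmissible S E ∧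
          r = θ * ∑ i, tnormAux θ S m (tsProj (E i) x)})

/-- The Tsirelson norm `‖x‖_{θ,S} = sup_m ‖x‖_m` on `c₀₀`. -/
def tnorm (θ : ℝ) (S : Set (Finset ℕ+)) (x : ℕ+ →₀ ℝ) : ℝ :=
  ⨆ m : ℕ, tnormAux θ S m x

/-- `X`, together with the sequence `e` of unit vectors, is (a realization of) the
Tsirelson space `T[θ, S_n]`: a Banach space containing `c₀₀` isometrically
(w.r.t. the Tsirelson norm) as a dense subspace, in which `(e i)` is a
(1-unconditional) basis, i.e. every `x` has a unique expansion `x = ∑ᵢ aᵢ eᵢ`. -/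
structure IsTsirelsonSpace (θ : ℝ) (n : ℕ) (X : Type*) [NormedAddCommGroup X]
    [NormedSpace ℝ X] (e : ℕ+ → X) : Prop where
  complete : CompleteSpace X
  norm_embed : ∀ a : ℕ+ →₀ ℝ, ‖a.sum fun i c => c • e i‖ = tnorm θ (Schreier n) a
  dense_embed : DenseRange fun a : ℕ+ →₀ ℝ => a.sum fun i c => c • e i
  expansion : ∀ x : X, ∃! a : ℕ+ → ℝ, HasSum (fun i => a i • e i) x

lemma ting_norm_one_of_comb {X : Type*} [NormedAddCommGroup X] [NormedSpace ℝ X]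
    (p r s : X) (a b : ℝ) (ha : 0 ≤ a) (hb : 0 ≤ b) (hab : a + b = 1)
    (hp : ‖p‖ ≤ 1) (hr : ‖r‖ ≤ 1) (hs : ‖s‖ ≤ 1)
    (h : ‖(1/2:ℝ) • ((1/2:ℝ) • (p + r) + s)‖ = 1) :
    ‖(1/2:ℝ) • (p + (a • r + b • s))‖ = 1 := by
  have e1 : (1/2:ℝ) • ((1/2:ℝ) • (p + r) + s) =
      (1/4:ℝ) • ((1/2:ℝ) • (p + (a • r + b • s))) + ((1/8:ℝ) • p + ((1/4 - a/8) • r + (1/2-b/8) • s)) := by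
    module
  have n0 : ∀ (t : ℝ) (x : X), 0 ≤ t → ‖x‖ ≤ 1 → ‖t • x‖ ≤ t := by
    intro t x ht hx
    rw [norm_smul, Real.norm_of_nonneg ht]
    nlinarith
  have hq : ‖a • r + b • s‖ ≤ 1 := by
    have := norm_add_le (a • r) (b • s)
    linarith [n0 a r ha hr, n0 b s hb hs]
  apply le_antisymm
  · have := norm_add_le p (a • r + b • s)
    rw [norm_smul, Real.norm_of_nonneg (by norm_num)]
    linarith
  · rw [e1] at h
    have h1 := norm_add_le ((1/4:ℝ) • ((1/2:ℝ) • (p + (a • r + b • s)))) ((1/8:ℝ) • p + ((1/4 - a/8) • r + (1/2-b/8) • s))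
    have h2 := norm_add_le ((1/8:ℝ) • p) ((1/4 - a/8) • r + (1/2-b/8) • s)
    have h3 := norm_add_le ((1/4 - a/8) • r) ((1/2-b/8) • s)
    have h4 := n0 (1/8) p (by norm_num) hp
    have h5 := n0 (1/4-a/8) r (by linarith) hr
    have h6 := n0 (1/2-b/8) s (by linarith) hs
    rw [h, norm_smul (1/4:ℝ), Real.norm_of_nonneg (by norm_num : (0:ℝ) ≤ 1/4)] at h1
    linarith

/-- nearest point in the face -/
lemma ting_near {X : Type*} [NormedAddCommGroup X] [NormedSpace ℝ X]
    (θ : ℝ) (h0 : 0 < θ) (hθ : θ ≤ 1/2) (v : X) (c : X →ₗ[ℝ] ℝ) (hv : c v = 1)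
    (hc : ∀ x, |c x| ≤ ‖x‖)
    (hL : ∀ x t, ‖x + t • v‖ ≤ max |c x + t| (‖x‖ + θ * |t|))
    (hR : ∀ x, ‖x - (2 * c x) • v‖ ≤ ‖x‖)
    (x : X) (hx : ‖x‖ = 1) : ∃ y : X, ‖y‖ = 1 ∧ c y = 1 ∧ ‖x - y‖ ≤ 1 - c x := by
  have hcx := hc x
  rw [hx] at hcx
  obtain ⟨ha1, ha2⟩ := abs_le.1 hcx
  have key : ∀ y : X, c y = 1 → ‖y‖ ≤ 1 → ‖y‖ = 1 := by
    intro y h1 h2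
    have := hc y
    rw [h1, abs_one] at this
    linarith
  rcases le_total 0 (c x) with ha | ha
  · set a := c x with hadef
    have hpos : 0 < 1 - a * θ := by nlinarith
    set l := (1 - θ) / (1 - a * θ) with hl
    have hl1 : l * (1 - a * θ) = 1 - θ := by exact div_mul_cancel₀ _ hpos.ne'
    have hl0 : 0 ≤ l := div_nonneg (by linarith) hpos.le
    have hl2 : l ≤ 1 := by rw [hl, div_le_one hpos]; nlinarith
    have hcy : c (l • x + (1 - l * a) • v) = 1 := by
      simp [hv, ← hadef]
    refine ⟨l • x + (1 - l * a) • v, key _ hcy ?_, hcy, ?_⟩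
    · refine (hL _ _).trans (max_le ?_ ?_)
      · simp [← hadef]
      · rw [norm_smul, Real.norm_of_nonneg hl0, hx, abs_of_nonneg (by nlinarith)]
        nlinarith
    · have hd : x - (l • x + (1 - l * a) • v) =
        ((1 - l) • x + (1 - a - (1 - l) * a) • v)
          - (2 * c ((1 - l) • x + (1 - a - (1 - l) * a) • v)) • v := by
        simp only [map_add, map_smul, hv, ← hadef, smul_eq_mul]
        module
      rw [hd]
      refine (hR _).trans ((hL _ _).trans (max_le ?_ ?_))
      · simp only [map_smul, ← hadef, smul_eq_mul]
        rw [abs_of_nonneg] <;> linarith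
      · have h1l : (1 - l) * (1 - a * θ) = θ * (1 - a) := by linarith
        have hnn : 0 ≤ 1 - a - (1 - l) * a := by
          by_contra hcon
          push Not at hcon
          have : (1 - a - (1 - l) * a) * (1 - a * θ) < 0 := mul_neg_of_neg_of_pos hcon hpos
          have h2 : (1 - a - (1 - l) * a) * (1 - a * θ) = (1 - a) * (1 - 2 * (a * θ)) := by
            linear_combination (-a) * h1l
          rw [h2] at this
          have : 0 ≤ (1 - a) * (1 - 2 * (a * θ)) := mul_nonneg (by linarith) (by nlinarith)
          linarith
        rw [norm_smul, Real.norm_of_nonneg (by linarith), hx, abs_of_nonneg hnn]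
        nlinarith
  · set a := c x with hadef
    have hz : ‖x - a • v‖ ≤ 1 := by
      have : x - a • v = (1/2:ℝ) • (x + (x - (2 * a) • v)) := by module
      rw [this, norm_smul, Real.norm_of_nonneg (by norm_num)]
      have h1 := norm_add_le x (x - (2 * a) • v)
      have h2 := hR x
      rw [← hadef] at h2
      linarith
    have hcz : c (x - a • v) = 0 := by simp [hv, ← hadef]
    have hcy : c ((1/2:ℝ) • (x - a • v) + (1:ℝ) • v) = 1 := by
      simp [hv, ← hadef]
    have hn : ‖(1/2:ℝ) • (x - a • v)‖ ≤ 1/2 := by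
      rw [norm_smul, Real.norm_of_nonneg (by norm_num)]; linarith
    refine ⟨(1/2:ℝ) • (x - a • v) + (1:ℝ) • v, key _ hcy ?_, hcy, ?_⟩
    · refine (hL _ _).trans (max_le ?_ ?_)
      · rw [map_smul, hcz]; simp
      · rw [abs_one]; linarith
    · have hd : x - ((1/2:ℝ) • (x - a • v) + (1:ℝ) • v) = (1/2:ℝ) • (x - a • v) + (a - 1) • v := by
        module
      rw [hd]
      refine (hL _ _).trans (max_le ?_ ?_)
      · rw [map_smul, hcz, abs_of_nonpos] <;> simp <;> linarith
      · rw [abs_of_nonpos (by linarith)]; nlinarith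

lemma ting_functional {X : Type*} [NormedAddCommGroup X] [NormedSpace ℝ X]
    (θ : ℝ) (h0 : 0 < θ) (hθ : θ ≤ 1/2) (v : X) (c : X →ₗ[ℝ] ℝ) (hv : c v = 1)
    (hc : ∀ x, |c x| ≤ ‖x‖)
    (hL : ∀ x t, ‖x + t • v‖ ≤ max |c x + t| (‖x‖ + θ * |t|))
    (hR : ∀ x, ‖x - (2 * c x) • v‖ ≤ ‖x‖)
    (U : Metric.sphere (0 : X) 1 → Metric.sphere (0 : X) 1)
    (hU : Isometry U) (hUsurj : Function.Surjective U) :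
    ∃ f : X →ₗ[ℝ] ℝ, ∀ x : Metric.sphere (0 : X) 1, c (U x : X) = f x := by
  have hd : ∀ s t : Metric.sphere (0 : X) 1, ‖(U s : X) - U t‖ = ‖(s : X) - t‖ := by
    intro s t
    have := hU.dist_eq s t
    rwa [Subtype.dist_eq, Subtype.dist_eq, dist_eq_norm, dist_eq_norm] at this
  have hneg : ∀ s : Metric.sphere (0 : X) 1, ((-s : Metric.sphere (0 : X) 1) : X) = -(s : X) :=
    fun s => rfl
  have hS : ∀ s : Metric.sphere (0 : X) 1, ‖(s : X)‖ = 1 := fun s => by simp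
  have hcS : ∀ s : Metric.sphere (0 : X) 1, |c s| ≤ 1 := fun s => (hc _).trans (hS s).le
  have hvn : ‖v‖ = 1 := by
    apply le_antisymm
    · have := hL 0 1
      simp only [map_zero, zero_add, one_smul, abs_one, norm_zero, mul_one] at this
      exact this.trans (max_le le_rfl (by linarith))
    · have := hc v
      rwa [hv, abs_one] at this
  have two : ∀ x y : X, ‖x‖ ≤ 1 → ‖y‖ ≤ 1 → ‖x - y‖ ≤ 2 := by
    intro x y hx hy
    linarith [norm_sub_le x y]
  -- the stars of `v` and `-v`
  have star1 : ∀ s : Metric.sphere (0 : X) 1, ‖(s : X) - v‖ = 2 → c s = -1 := by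
    intro s hs
    have h1 := hL s (-1)
    rw [neg_one_smul, ← sub_eq_add_neg, hs, hS, abs_neg, abs_one] at h1
    have h2 := abs_le.1 (hcS s)
    rcases le_max_iff.1 h1 with h | h
    · rw [abs_of_nonpos (by linarith)] at h
      linarith
    · linarith
  have star2 : ∀ s : Metric.sphere (0 : X) 1, ‖(s : X) - (-v)‖ = 2 → c s = 1 := by
    intro s hs
    have h1 := star1 (-s) (by
      rw [← hs, ← norm_neg]; congr 1; simp only [hneg]; abel)
    simp only [hneg] at h1
    rw [map_neg] at h1
    linarith
  obtain ⟨w, hw⟩ := hUsurj ⟨v, by simpa using hvn⟩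
  obtain ⟨w', hw'⟩ := hUsurj ⟨-v, by simpa using hvn⟩
  have F1 : ∀ s : Metric.sphere (0 : X) 1, ‖(s : X) - w‖ = 2 → c (U s : X) = -1 := by
    intro s hs
    apply star1
    rw [← hs, ← hd, hw]
  have F2 : ∀ s : Metric.sphere (0 : X) 1, ‖(s : X) - w'‖ = 2 → c (U s : X) = 1 := by
    intro s hs
    apply star2
    rw [← hs, ← hd, hw']
  have F3 : ∀ s t : Metric.sphere (0 : X) 1, c (U s : X) = 1 → c (U t : X) = -1 →
      ‖(s : X) - t‖ = 2 := by
    intro s t hs ht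
    apply le_antisymm (two _ _ (hS s).le (hS t).le)
    rw [← hd]
    have := hc ((U s : X) - U t)
    rw [map_sub, hs, ht] at this
    norm_num at this
    exact this
  have dbl : ∀ s : Metric.sphere (0 : X) 1, ‖((-s : Metric.sphere (0 : X) 1) : X) - s‖ = 2 := by
    intro s
    have : ((-s : Metric.sphere (0 : X) 1) : X) - s = (-2:ℝ) • (s : X) := by simp only [hneg]; module
    rw [this, norm_smul, hS]; norm_num
  have F4 : ∀ s : Metric.sphere (0 : X) 1, c (U s : X) = 1 → c (U (-s) : X) = -1 := by
    intro s hs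
    apply F1
    rw [← F3 s (-w) hs (F1 _ (dbl w)), ← norm_neg]
    congr 1; simp only [hneg]; abel
  have F5 : ∀ s : Metric.sphere (0 : X) 1, c (U s : X) = -1 → c (U (-s) : X) = 1 := by
    intro s hs
    apply F2
    rw [← F3 (-w') s (F2 _ (dbl w')) hs]
    congr 1; simp only [hneg]; abel
  let P : Set X := {p | ‖p‖ = 1 ∧ ∀ s : Metric.sphere (0 : X) 1, ‖(s : X) - p‖ = 2 → c (U s : X) = -1}
  have wP : (w : X) ∈ P := ⟨hS w, F1⟩
  have P1 : ∀ p ∈ P, ∀ q : X, ‖q‖ ≤ 1 → ‖(1/2:ℝ) • (p + q)‖ = 1 → (1/2:ℝ) • (p + q) ∈ P := by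
    intro p hp q hq hpq
    refine ⟨hpq, fun s hs => hp.2 s ?_⟩
    apply le_antisymm (two _ _ (hS s).le hp.1.le)
    have e1 : (s : X) - (1/2:ℝ) • (p + q) = (1/2:ℝ) • ((s - p) + (s - q)) := by module
    rw [e1, norm_smul, Real.norm_of_nonneg (by norm_num)] at hs
    have := norm_add_le ((s : X) - p) (s - q)
    have := two s q (hS s).le hq
    linarith
  have P2 : ∀ p (hp : p ∈ P), c (U ⟨p, by simpa using hp.1⟩ : X) = 1 := by
    intro p hp
    have h1 := F5 (-⟨p, by simpa using hp.1⟩) (hp.2 _ (dbl _))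
    simpa using h1
  let D : Set X := {r | ‖r‖ ≤ 1 ∧ ∀ p ∈ P, ‖(1/2:ℝ) • (p + r)‖ = 1}
  have BD : ∀ s : Metric.sphere (0 : X) 1, c (U s : X) = 1 → (s : X) ∈ D := by
    intro s hs
    refine ⟨(hS s).le, fun p hp => ?_⟩
    have h1 := F3 ⟨p, by simpa using hp.1⟩ (-s) (P2 p hp) (F4 s hs)
    simp only [hneg] at h1
    rw [sub_neg_eq_add] at h1
    rw [norm_smul, h1]; norm_num
  have Dconv : Convex ℝ D := by
    intro r hr s hs a b ha hb hab
    constructor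
    · have := norm_add_le (a • r) (b • s)
      rw [norm_smul, norm_smul, Real.norm_of_nonneg ha, Real.norm_of_nonneg hb] at this
      nlinarith [hr.1, hs.1]
    · intro p hp
      exact ting_norm_one_of_comb p r s a b ha hb hab hp.1.le hr.1 hs.1
        (hs.2 _ (P1 p hp r hr.1 (hr.2 p hp)))
  have Ddisj : Disjoint (Metric.ball (0 : X) 1) D := by
    rw [Set.disjoint_left]
    intro r hr hrD
    have h1 := hrD.2 _ wP
    rw [norm_smul, Real.norm_of_nonneg (by norm_num)] at h1
    have := norm_add_le (w : X) r
    rw [hS] at this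
    rw [mem_ball_zero_iff] at hr
    linarith
  obtain ⟨f, u, hf1, hf2⟩ := geometric_hahn_banach_open (convex_ball (0 : X) 1) Metric.isOpen_ball
    Dconv Ddisj
  have hu : 0 < u := by
    have := hf1 0 (by simp)
    simpa using this
  have hfle : ∀ x : X, f x ≤ u * ‖x‖ := by
    intro x
    by_contra hcon
    push Not at hcon
    have hfx : 0 < f x := lt_of_le_of_lt (by positivity) hcon
    have := hf1 ((u / f x) • x) (by
      rw [mem_ball_zero_iff, norm_smul, Real.norm_of_nonneg (by positivity), div_mul_eq_mul_div,
        div_lt_one hfx]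
      exact hcon)
    rw [map_smul, smul_eq_mul, div_mul_cancel₀ _ hfx.ne'] at this
    exact lt_irrefl _ this
  have near := ting_near θ h0 hθ v c hv hc hL hR
  have up : ∀ s : Metric.sphere (0 : X) 1, u * c (U s : X) ≤ f s := by
    intro s
    obtain ⟨y, hy1, hy2, hy3⟩ := near (U s) (hS _)
    obtain ⟨t, ht⟩ := hUsurj ⟨y, by simpa using hy1⟩
    have hty : (U t : X) = y := by rw [ht]
    rw [← hty] at hy2 hy3
    rw [hd] at hy3
    have h1 := hf2 t (BD t hy2)
    have h2 := hfle (t - s)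
    rw [map_sub, norm_sub_rev] at h2
    nlinarith
  refine ⟨u⁻¹ • (f : X →ₗ[ℝ] ℝ), fun s => ?_⟩
  have h1 := up s
  have h2 : f s ≤ u * c (U s : X) := by
    obtain ⟨y, hy1, hy2, hy3⟩ := near (-(U s)) (by rw [norm_neg]; exact hS _)
    obtain ⟨t, ht⟩ := hUsurj ⟨-y, by simpa using hy1⟩
    have hty : (U t : X) = -y := by rw [ht]
    have h3 : c (U t : X) = -1 := by rw [hty, map_neg, hy2]
    have h4 : ‖(s : X) - t‖ ≤ 1 + c (U s : X) := by
      rw [← hd, hty, ← norm_neg]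
      rw [map_neg] at hy3
      convert hy3 using 1
      · congr 1; abel
      · ring
    have h5 := hf2 _ (BD _ (F5 t h3))
    have h6 := hfle (s - t)
    simp only [hneg] at h5
    rw [map_neg] at h5
    rw [map_sub] at h6
    nlinarith
  have h3 : f s = u * c (U s : X) := le_antisymm h2 h1
  simp [h3]
  field_simp

/-- the `ℓ₁` norm -/
def tsL1 (x : ℕ+ →₀ ℝ) : ℝ := ∑ i ∈ x.support, |x i|

lemma tsProj_apply (E : Finset ℕ+) (x : ℕ+ →₀ ℝ) (i : ℕ+) :
    tsProj E x i = if i ∈ E then x i else 0 := by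
  simp [tsProj, Finsupp.filter_apply]

lemma tsL1_proj (E : Finset ℕ+) (x : ℕ+ →₀ ℝ) :
    tsL1 (tsProj E x) = ∑ i ∈ x.support, if i ∈ E then |x i| else 0 := by
  unfold tsL1
  have : (tsProj E x).support ⊆ x.support := by
    intro i hi
    simp only [Finsupp.mem_support_iff, tsProj_apply] at hi ⊢
    intro h
    simp [h] at hi
  rw [Finset.sum_subset this]
  · refine Finset.sum_congr rfl fun i _ => ?_
    rw [tsProj_apply]
    split_ifs <;> simp
  · intro i _ hi
    simpa using hi

lemma adm_unique {S : Set (Finset ℕ+)} {d : ℕ} {E : Fin d → Finset ℕ+} (h : TsAdmissible S E)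
    {i : ℕ+} {m n : Fin d} (hm : i ∈ E m) (hn : i ∈ E n) : m = n := by
  rcases lt_trichotomy m n with hh | hh | hh
  · exact absurd (h.2.1 m n hh i hm i hn) (lt_irrefl _)
  · exact hh
  · exact absurd (h.2.1 n m hh i hn i hm) (lt_irrefl _)

lemma adm_sum_le {S : Set (Finset ℕ+)} {d : ℕ} {E : Fin d → Finset ℕ+} (h : TsAdmissible S E)
    (i : ℕ+) (a : ℝ) (ha : 0 ≤ a) : ∑ n, (if i ∈ E n then a else 0) ≤ a := by
  by_cases hi : ∃ m, i ∈ E m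
  · obtain ⟨m, hm⟩ := hi
    rw [Finset.sum_eq_single m]
    · simp [hm]
    · intro n _ hn
      rw [if_neg]
      intro hin
      exact hn (adm_unique h hin hm)
    · simp
  · push Not at hi
    simp [hi, ha]

lemma tsL1_nonneg (x : ℕ+ →₀ ℝ) : 0 ≤ tsL1 x := Finset.sum_nonneg fun _ _ => abs_nonneg _

lemma tsL1_sum {S : Set (Finset ℕ+)} {d : ℕ} {E : Fin d → Finset ℕ+} (h : TsAdmissible S E)
    (x : ℕ+ →₀ ℝ) : ∑ n, tsL1 (tsProj (E n) x) ≤ tsL1 x := by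
  simp only [tsL1_proj]
  rw [Finset.sum_comm]
  exact Finset.sum_le_sum fun i _ => adm_sum_le h i _ (abs_nonneg _)

lemma abs_le_tsL1 (x : ℕ+ →₀ ℝ) (i : ℕ+) : |x i| ≤ tsL1 x := by
  by_cases hi : i ∈ x.support
  · exact Finset.single_le_sum (f := fun i => |x i|) (fun _ _ => abs_nonneg _) hi
  · rw [Finsupp.notMem_support_iff.1 hi, abs_zero]
    exact tsL1_nonneg x

lemma aux_nonneg (θ : ℝ) (S : Set (Finset ℕ+)) (m : ℕ) (x : ℕ+ →₀ ℝ) : 0 ≤ tnormAux θ S m x := by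
  induction m with
  | zero => exact Real.iSup_nonneg fun _ => abs_nonneg _
  | succ m ih => exact ih.trans (le_max_left _ _)

lemma aux_le_l1 (θ : ℝ) (h0 : 0 ≤ θ) (h1 : θ ≤ 1) (S : Set (Finset ℕ+)) (m : ℕ) (x : ℕ+ →₀ ℝ) :
    tnormAux θ S m x ≤ tsL1 x := by
  induction m generalizing x with
  | zero => exact Real.iSup_le (abs_le_tsL1 x) (tsL1_nonneg x)
  | succ m ih =>
    refine max_le (ih x) (Real.sSup_le ?_ (tsL1_nonneg x))
    rintro r ⟨d, E, hE, rfl⟩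
    have h2 : ∑ i, tnormAux θ S m (tsProj (E i) x) ≤ tsL1 x :=
      (Finset.sum_le_sum fun i _ => ih _).trans (tsL1_sum hE x)
    nlinarith [tsL1_nonneg x]

lemma aux_bdd (θ : ℝ) (h0 : 0 ≤ θ) (h1 : θ ≤ 1) (S : Set (Finset ℕ+)) (m : ℕ) (x : ℕ+ →₀ ℝ) :
    BddAbove {r : ℝ | ∃ (d : ℕ) (E : Fin d → Finset ℕ+), TsAdmissible S E ∧
          r = θ * ∑ i, tnormAux θ S m (tsProj (E i) x)} := by
  refine ⟨tsL1 x, ?_⟩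
  rintro r ⟨d, E, hE, rfl⟩
  have h2 : ∑ i, tnormAux θ S m (tsProj (E i) x) ≤ tsL1 x :=
      (Finset.sum_le_sum fun i _ => aux_le_l1 θ h0 h1 S m _).trans (tsL1_sum hE x)
  nlinarith [tsL1_nonneg x]

lemma aux_coord (θ : ℝ) (S : Set (Finset ℕ+)) (m : ℕ) (x : ℕ+ →₀ ℝ) (j : ℕ+) :
    |x j| ≤ tnormAux θ S m x := by
  induction m with
  | zero => exact le_ciSup (f := fun i => |x i|) ⟨tsL1 x, by rintro _ ⟨i, rfl⟩; exact abs_le_tsL1 x i⟩ j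
  | succ m ih => exact ih.trans (le_max_left _ _)

lemma aux_abs (θ : ℝ) (S : Set (Finset ℕ+)) (m : ℕ) (x y : ℕ+ →₀ ℝ) (h : ∀ i, |x i| = |y i|) :
    tnormAux θ S m x = tnormAux θ S m y := by
  induction m generalizing x y with
  | zero => simp only [tnormAux, h]
  | succ m ih =>
    have h2 : ∀ E, tnormAux θ S m (tsProj E x) = tnormAux θ S m (tsProj E y) := by
      intro E
      apply ih
      intro i
      simp only [tsProj_apply]
      split_ifs
      · exact h i
      · rfl
    simp only [tnormAux, h2, ih x y h]

lemma tsProj_add_single (E : Finset ℕ+) (x : ℕ+ →₀ ℝ) (j : ℕ+) (t : ℝ) :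
    tsProj E (x + Finsupp.single j t) =
      tsProj E x + Finsupp.single j (if j ∈ E then t else 0) := by
  ext i
  simp only [tsProj_apply, Finsupp.add_apply]
  by_cases hij : j = i
  · subst hij
    simp only [Finsupp.single_eq_same]
    split_ifs <;> simp
  · simp [Finsupp.single_eq_of_ne' hij]

lemma aux_add (θ : ℝ) (h0 : 0 ≤ θ) (h1 : θ ≤ 1) (S : Set (Finset ℕ+)) (m : ℕ) (x : ℕ+ →₀ ℝ)
    (j : ℕ+) (t : ℝ) :
    tnormAux θ S m (x + Finsupp.single j t) ≤ max |x j + t| (tnormAux θ S m x + θ * |t|) := by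
  have hpos : ∀ m, 0 ≤ max |x j + t| (tnormAux θ S m x + θ * |t|) :=
    fun m => (abs_nonneg _).trans (le_max_left _ _)
  induction m generalizing x t with
  | zero =>
    refine Real.iSup_le (fun i => ?_) (hpos 0)
    by_cases hij : j = i
    · subst hij
      simp
    · refine le_trans ?_ (le_max_right _ _)
      rw [Finsupp.add_apply, Finsupp.single_eq_of_ne' hij, add_zero]
      have := aux_coord θ S 0 x i
      have : 0 ≤ θ * |t| := by positivity
      linarith
  | succ m ih =>
    have tri : ∀ (y : ℕ+ →₀ ℝ) (s : ℝ), tnormAux θ S m (y + Finsupp.single j s)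
        ≤ tnormAux θ S m y + |s| := by
      intro y s
      refine (ih y s (fun m => (abs_nonneg _).trans (le_max_left _ _))).trans (max_le ?_ ?_)
      · have := abs_add_le (y j) s
        have := aux_coord θ S m y j
        linarith
      · nlinarith [abs_nonneg s]
    refine max_le ?_ (Real.sSup_le ?_ (hpos _))
    · refine (ih x t hpos).trans (max_le_max le_rfl ?_)
      gcongr
      exact le_max_left _ _
    · rintro r ⟨d, E, hE, rfl⟩
      refine le_trans ?_ (le_max_right _ _)
      have e1 : θ * ∑ i, tnormAux θ S m (tsProj (E i) x) ≤ tnormAux θ S (m+1) x :=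
        (le_csSup (aux_bdd θ h0 h1 S m x) ⟨d, E, hE, rfl⟩).trans (le_max_right _ _)
      have e2 : ∑ i, tnormAux θ S m (tsProj (E i) (x + Finsupp.single j t)) ≤
          ∑ i, tnormAux θ S m (tsProj (E i) x) + |t| := by
        calc _ ≤ ∑ i, (tnormAux θ S m (tsProj (E i) x) + (if j ∈ E i then |t| else 0)) := by
              refine Finset.sum_le_sum fun i _ => ?_
              rw [tsProj_add_single]
              refine (tri _ _).trans (le_of_eq ?_)
              congr 1
              split_ifs <;> simp
          _ ≤ _ := by
              rw [Finset.sum_add_distrib]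
              gcongr
              exact adm_sum_le hE j _ (abs_nonneg _)
      nlinarith

lemma tnorm_bdd (θ : ℝ) (h0 : 0 ≤ θ) (h1 : θ ≤ 1) (S : Set (Finset ℕ+)) (x : ℕ+ →₀ ℝ) :
    BddAbove (Set.range fun m => tnormAux θ S m x) :=
  ⟨tsL1 x, by rintro _ ⟨m, rfl⟩; exact aux_le_l1 θ h0 h1 S m x⟩

lemma tnorm_coord (θ : ℝ) (h0 : 0 ≤ θ) (h1 : θ ≤ 1) (S : Set (Finset ℕ+)) (x : ℕ+ →₀ ℝ) (j : ℕ+) :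
    |x j| ≤ tnorm θ S x :=
  (aux_coord θ S 0 x j).trans (le_ciSup (tnorm_bdd θ h0 h1 S x) 0)

lemma tnorm_add (θ : ℝ) (h0 : 0 ≤ θ) (h1 : θ ≤ 1) (S : Set (Finset ℕ+)) (x : ℕ+ →₀ ℝ)
    (j : ℕ+) (t : ℝ) :
    tnorm θ S (x + Finsupp.single j t) ≤ max |x j + t| (tnorm θ S x + θ * |t|) := by
  refine ciSup_le fun m => (aux_add θ h0 h1 S m x j t).trans (max_le_max le_rfl ?_)
  gcongr
  exact le_ciSup (tnorm_bdd θ h0 h1 S x) m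

lemma tnorm_abs (θ : ℝ) (S : Set (Finset ℕ+)) (x y : ℕ+ →₀ ℝ) (h : ∀ i, |x i| = |y i|) :
    tnorm θ S x = tnorm θ S y := by
  unfold tnorm
  simp only [fun m => aux_abs θ S m x y h]

/-- Tingley's problem for `T[θ, S₁]`, integer `θ⁻¹ ≥ 2`.
Every surjective isometry of the unit sphere of `T[θ, S₁]` extends to a surjective
linear isometry of the whole space. -/
theorem tsirelson_tingley_S1
    (θ : ℝ) (hθ0 : 0 < θ) (k : ℕ) (hk : 2 ≤ k) (hθk : θ⁻¹ = (k : ℝ))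
    (X : Type*) [NormedAddCommGroup X] [NormedSpace ℝ X] (e : ℕ+ → X)
    (hX : IsTsirelsonSpace θ 1 X e)
    (U : Metric.sphere (0 : X) 1 → Metric.sphere (0 : X) 1)
    (hU : Isometry U) (hUsurj : Function.Surjective U) :
    ∃ V : X →ₗᵢ[ℝ] X, Function.Surjective V ∧
      ∀ x : Metric.sphere (0 : X) 1, V (x : X) = (U x : X) := by
  have hθ : θ ≤ 1/2 := by
    have h1 : θ = (k:ℝ)⁻¹ := by rw [← hθk, inv_inv]
    have h2 : (2:ℝ) ≤ k := by exact_mod_cast hk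
    rw [h1, one_div]
    exact inv_anti₀ (by norm_num) h2
  have hθ1 : θ ≤ 1 := by linarith
  choose co hco huniq using hX.expansion
  let ι : (ℕ+ →₀ ℝ) →ₗ[ℝ] X := Finsupp.linearCombination ℝ e
  have hι : ∀ a, ι a = a.sum fun i c => c • e i := fun a => rfl
  have hιn : ∀ a, ‖ι a‖ = tnorm θ (Schreier 1) a := fun a => by rw [hι, hX.norm_embed]
  have coadd : ∀ x y, co (x + y) = co x + co y := by
    intro x y
    refine (huniq _ _ ?_).symm
    simpa [add_smul] using (hco x).add (hco y)
  have cosmul : ∀ (r : ℝ) x, co (r • x) = r • co x := by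
    intro r x
    refine (huniq _ _ ?_).symm
    simpa [mul_smul] using (hco x).const_smul r
  have coι : ∀ a : ℕ+ →₀ ℝ, co (ι a) = a := by
    intro a
    refine (huniq _ _ ?_).symm
    have : HasSum (fun i => a i • e i) (∑ i ∈ a.support, a i • e i) := by
      apply hasSum_sum_of_ne_finset_zero
      intro i hi
      rw [Finsupp.notMem_support_iff.1 hi, zero_smul]
    exact this
  let c : ℕ+ → X →ₗ[ℝ] ℝ := fun j =>
    { toFun := fun x => co x j
      map_add' := fun x y => by rw [coadd]; rfl
      map_smul' := fun r x => by rw [cosmul]; rfl }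
  have cι : ∀ j a, c j (ι a) = a j := fun j a => congrFun (coι a) j
  have cinj : ∀ x y, (∀ j, c j x = c j y) → x = y := by
    intro x y h
    have h1 : co x = co y := funext h
    have h2 := hco x
    rw [h1] at h2
    exact h2.unique (hco y)
  have hιe : ∀ j t, ι (Finsupp.single j t) = t • e j := fun j t => by
    simp [ι]
  have hc : ∀ j x, |c j x| ≤ ‖x‖ := by
    intro j x
    have h1 : Filter.Tendsto (fun s : Finset ℕ+ => ‖∑ i ∈ s, co x i • e i‖) Filter.atTop (nhds ‖x‖) :=
      (hco x).norm
    refine ge_of_tendsto h1 ?_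
    filter_upwards [Filter.eventually_ge_atTop ({j} : Finset ℕ+)] with s hs
    have hj : j ∈ s := hs (by simp)
    have h2 : ∑ i ∈ s, co x i • e i = ι (∑ i ∈ s, Finsupp.single i (co x i)) := by
      rw [map_sum]; simp only [hιe]
    rw [h2, hιn]
    refine le_trans (le_of_eq ?_) (tnorm_coord θ hθ0.le hθ1 _ _ j)
    congr 1
    rw [Finsupp.finsetSum_apply, Finset.sum_eq_single j]
    · simp; rfl
    · intro i _ hij
      exact Finsupp.single_eq_of_ne' hij
    · exact fun h => absurd hj h
  have ccont : ∀ j, Continuous (c j) := by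
    intro j
    exact (LinearMap.mkContinuous (c j) 1 (fun x => by simpa using hc j x)).continuous
  have hce : ∀ j, c j (e j) = 1 := by
    intro j
    have := cι j (Finsupp.single j 1)
    rwa [hιe, one_smul, Finsupp.single_eq_same] at this
  have hL : ∀ j x t, ‖x + t • e j‖ ≤ max |c j x + t| (‖x‖ + θ * |t|) := by
    intro j x t
    refine hX.dense_embed.induction_on (p := fun x => ‖x + t • e j‖ ≤ max |c j x + t| (‖x‖ + θ * |t|))
      x ?_ ?_
    · have := ccont j
      exact isClosed_le (by fun_prop) (by fun_prop)
    · intro a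
      change ‖ι a + t • e j‖ ≤ max |c j (ι a) + t| (‖ι a‖ + θ * |t|)
      rw [← hιe, ← map_add, hιn, hιn, cι]
      exact tnorm_add θ hθ0.le hθ1 _ _ _ _
  have hR : ∀ j x, ‖x - (2 * c j x) • e j‖ ≤ ‖x‖ := by
    intro j x
    refine hX.dense_embed.induction_on (p := fun x => ‖x - (2 * c j x) • e j‖ ≤ ‖x‖)
      x ?_ ?_
    · have := ccont j
      exact isClosed_le (by fun_prop) (by fun_prop)
    · intro a
      change ‖ι a - (2 * c j (ι a)) • e j‖ ≤ ‖ι a‖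
      rw [cι, ← hιe, ← map_sub, hιn, hιn]
      refine (tnorm_abs _ _ _ _ fun i => ?_).le
      by_cases hij : j = i
      · subst hij
        simp only [Finsupp.sub_apply, Finsupp.single_eq_same]
        rw [← abs_neg]
        congr 1; ring
      · simp [Finsupp.single_eq_of_ne' hij]
  have hf := fun j => ting_functional θ hθ0 hθ (e j) (c j) (hce j) (hc j) (hL j) (hR j) U hU hUsurj
  choose f hf using hf
  have hS : ∀ s : Metric.sphere (0 : X) 1, ‖(s : X)‖ = 1 := fun s => by simp
  have ex : ∀ x : X, ∃ y : X, ‖y‖ = ‖x‖ ∧ ∀ j, c j y = f j x := by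
    intro x
    by_cases hx : x = 0
    · exact ⟨0, by simp [hx], by simp [hx]⟩
    · have hx' : ‖x‖ ≠ 0 := norm_ne_zero_iff.2 hx
      have hm : ‖x‖⁻¹ • x ∈ Metric.sphere (0 : X) 1 := by
        rw [mem_sphere_zero_iff_norm, norm_smul, norm_inv, norm_norm, inv_mul_cancel₀ hx']
      refine ⟨‖x‖ • (U ⟨_, hm⟩ : X), ?_, fun j => ?_⟩
      · rw [norm_smul, norm_norm, hS, mul_one]
      · rw [map_smul, hf, map_smul, smul_smul, mul_inv_cancel₀ hx', one_smul]
  choose V hV1 hV2 using ex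
  let VL : X →ₗ[ℝ] X :=
    { toFun := V
      map_add' := fun x y => cinj _ _ fun j => by simp only [map_add, hV2]
      map_smul' := fun r x => cinj _ _ fun j => by simp only [map_smul, hV2, RingHom.id_apply] }
  have hVU : ∀ x : Metric.sphere (0 : X) 1, VL (x : X) = (U x : X) := by
    intro x
    refine cinj _ _ fun j => ?_
    rw [hf]
    exact hV2 _ j
  refine ⟨⟨VL, hV1⟩, ?_, hVU⟩
  intro y
  change ∃ x, VL x = y
  by_cases hy : y = 0
  · exact ⟨0, by simp [hy]⟩
  · have hy' : ‖y‖ ≠ 0 := norm_ne_zero_iff.2 hy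
    have hm : ‖y‖⁻¹ • y ∈ Metric.sphere (0 : X) 1 := by
      rw [mem_sphere_zero_iff_norm, norm_smul, norm_inv, norm_norm, inv_mul_cancel₀ hy']
    obtain ⟨x, hx⟩ := hUsurj ⟨_, hm⟩
    refine ⟨‖y‖ • (x : X), ?_⟩
    rw [map_smul, hVU, hx, smul_smul, mul_inv_cancel₀ hy', one_smul]
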